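/- Let h : ℝ → ℝ be continuous and let H : ℝ → ℝ be differentiable with H' = h and H(0) = 0. Suppose w : [0,∞) → ℝ is twice differentiable, w''(x) = h(w(x)) for all x ≥ 0, and w(x) → 0 and w'(x) → 0 as x → ∞. Then (1/2)w'(x)² = H(w(x)) for every x ≥ 0; in particular H(w(0)) ≥ 0. (Applied with h(η) = g(η) − e^{−η} and H = V the Sagdeev potential, this gives the necessity of the condition V(φ_b) ≥ 0 for the existence of the stationary sheath solution with boundary value φ̃(0) = φ_b.) -/

import Mathlib

open Real Set Filter

/-!
The derivative of the energy `½‖w'‖² - H(w)` is `⟪w', w''⟫ - ⟪∇H(w), w'⟫`, which vanishes along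
solutions of `w'' = ∇H(w)`. So the energy is constant, and its value is its limit at infinity,
`-H(p)` if `w → p` and `w' → 0`.
-/

open scoped Topology RealInnerProductSpace

section ConstantOfDerivZero

variable {F : Type*} [NormedAddCommGroup F] [NormedSpace ℝ F]

theorem eqOn_Ici_const_of_hasDerivWithinAt_zero_of_tendsto {f : ℝ → F} {a : ℝ} {c : F}
    (hf : ∀ x ∈ Ici a, HasDerivWithinAt f 0 (Ici a) x) (hlim : Tendsto f atTop (𝓝 c)) :
    EqOn f (fun _ ↦ c) (Ici a) := by
  intro x hx
  have eq_apply_x : ∀ y ∈ Ici a, f y = f x := fun y hy ↦ by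
    simpa [sub_eq_zero] using
      (convex_Ici a).norm_image_sub_le_of_norm_hasDerivWithin_le (C := 0) hf (by simp) hx hy
  have eventually_eq : f =ᶠ[atTop] fun _ ↦ f x :=
    (eventually_ge_atTop a).mono eq_apply_x
  exact tendsto_nhds_unique (tendsto_const_nhds.congr' eventually_eq.symm) hlim

end ConstantOfDerivZero

section Energy

variable {E : Type*} [NormedAddCommGroup E]

/-- The first integral `½‖w'‖² - H(w)` of the equation `w'' = ∇H(w)`: the mechanical energy for the
potential `-H`. The velocity `w'` is an independent argument, so that no derivative has to be
chosen at the endpoint of a half line. -/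
noncomputable def newtonEnergy (H : E → ℝ) (w w' : ℝ → E) (t : ℝ) : ℝ :=
  1 / 2 * ‖w' t‖ ^ 2 - H (w t)

theorem tendsto_newtonEnergy {H : E → ℝ} {w w' : ℝ → E} {l : Filter ℝ} {p v : E}
    (hH : ContinuousAt H p) (hw : Tendsto w l (𝓝 p)) (hw' : Tendsto w' l (𝓝 v)) :
    Tendsto (newtonEnergy H w w') l (𝓝 (1 / 2 * ‖v‖ ^ 2 - H p)) :=
  ((hw'.norm.pow 2).const_mul (1 / 2)).sub (hH.tendsto.comp hw)

variable [InnerProductSpace ℝ E] [CompleteSpace E]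

theorem hasDerivWithinAt_newtonEnergy {H : E → ℝ} {w w' : ℝ → E} {s : Set ℝ} {t : ℝ} {g b : E}
    (hH : HasGradientAt H g (w t)) (hw : HasDerivWithinAt w (w' t) s t)
    (hw' : HasDerivWithinAt w' b s t) :
    HasDerivWithinAt (newtonEnergy H w w') (⟪w' t, b⟫ - ⟪g, w' t⟫) s t := by
  have kinetic : HasDerivWithinAt (fun y ↦ 1 / 2 * ‖w' y‖ ^ 2) ⟪w' t, b⟫ s t :=
    (hw'.norm_sq.const_mul (1 / 2)).congr_deriv (by ring)
  have potential : HasDerivWithinAt (H ∘ w) ⟪g, w' t⟫ s t :=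
    hH.hasFDerivAt.comp_hasDerivWithinAt t hw
  exact kinetic.sub potential

theorem hasDerivWithinAt_newtonEnergy_zero {H : E → ℝ} {w w' : ℝ → E} {s : Set ℝ} {t : ℝ} {g : E}
    (hH : HasGradientAt H g (w t)) (hw : HasDerivWithinAt w (w' t) s t)
    (hw' : HasDerivWithinAt w' g s t) :
    HasDerivWithinAt (newtonEnergy H w w') 0 s t :=
  (hasDerivWithinAt_newtonEnergy hH hw hw').congr_deriv <| by
    rw [real_inner_comm, sub_self]

theorem first_integral_necessity_general {h : E → E} {H : E → ℝ} {w w' : ℝ → E} {a : ℝ} {p : E}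
    (hH : ∀ x ∈ Ici a, HasGradientAt H (h (w x)) (w x)) (hHp : ContinuousAt H p)
    (hw : ∀ x ∈ Ici a, HasDerivWithinAt w (w' x) (Ici a) x)
    (hw' : ∀ x ∈ Ici a, HasDerivWithinAt w' (h (w x)) (Ici a) x)
    (hwlim : Tendsto w atTop (𝓝 p)) (hw'lim : Tendsto w' atTop (𝓝 0)) :
    (∀ x ∈ Ici a, 1 / 2 * ‖w' x‖ ^ 2 = H (w x) - H p) ∧ H p ≤ H (w a) := by
  have energy_eq : EqOn (newtonEnergy H w w') (fun _ ↦ 1 / 2 * ‖(0 : E)‖ ^ 2 - H p) (Ici a) :=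
    eqOn_Ici_const_of_hasDerivWithinAt_zero_of_tendsto
      (fun x hx ↦ hasDerivWithinAt_newtonEnergy_zero (hH x hx) (hw x hx) (hw' x hx))
      (tendsto_newtonEnergy hHp hwlim hw'lim)
  have first_integral : ∀ x ∈ Ici a, 1 / 2 * ‖w' x‖ ^ 2 = H (w x) - H p := fun x hx ↦ by
    have := energy_eq hx
    simp only [newtonEnergy, norm_zero] at this
    linarith
  refine ⟨first_integral, sub_nonneg.mp ?_⟩
  rw [← first_integral a self_mem_Ici]
  positivity

end Energy

/-- First integral of the autonomous equation `w'' = h(w)` on `[0,∞)` with `w, w' → 0`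
at infinity: `(1/2)w'(x)² = H(w(x))` for every `x ≥ 0`, where `H` is the
antiderivative of `h` with `H(0) = 0`; in particular `H(w(0)) ≥ 0`.  (Applied with
`h(η) = g(η) − e^{−η}` and `H = V` the Sagdeev potential, this gives the necessity of
`V(φ_b) ≥ 0` for the stationary sheath with boundary value `φ̃(0) = φ_b`.) -/
theorem first_integral_necessity
    (h H w w' : ℝ → ℝ)
    (hcont : Continuous h)
    (hH : ∀ x : ℝ, HasDerivAt H (h x) x)
    (hH0 : H 0 = 0)
    (hw : ∀ x ∈ Ici (0 : ℝ), HasDerivWithinAt w (w' x) (Ici 0) x)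
    (hw' : ∀ x ∈ Ici (0 : ℝ), HasDerivWithinAt w' (h (w x)) (Ici 0) x)
    (hwlim : Tendsto w atTop (nhds 0))
    (hw'lim : Tendsto w' atTop (nhds 0)) :
    (∀ x ∈ Ici (0 : ℝ), (1 / 2) * (w' x) ^ 2 = H (w x)) ∧ 0 ≤ H (w 0) := by
  simpa [hH0] using first_integral_necessity_general
    (fun x _ ↦ (hH (w x)).hasGradientAt') (hH 0).continuousAt hw hw' hwlim hw'lim
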